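/- For every integer n ≥ 1 and every prime power q with q ≡ 1 (mod n), the cardinality of Res_n(F_q) equals Σ_{d | n} ϕ(n/d) · q^{n−1+d}, where the sum ranges over all divisors d of n. -/

import Mathlib

open Polynomial

/-- The resultant `Res(φ, ψ)` of a monic polynomial `φ` and a polynomial `ψ`, computed
(inside the algebraic closure) as the product `∏ ψ(αᵢ)` over the roots `αᵢ` of `φ`,
counted with multiplicity. -/
noncomputable def resultantAC {k : Type*} [Field k] (φ ψ : k[X]) : AlgebraicClosure k :=
  (((φ.map (algebraMap k (AlgebraicClosure k))).roots).map
    fun α => (ψ.map (algebraMap k (AlgebraicClosure k))).eval α).prod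

/-- `Res_n(k)`: the set of pairs `(φ, ψ)` of monic degree-`n` polynomials over `k`
with `Res(φ, ψ) = 1`. -/
def ResPairs (k : Type*) [Field k] (n : ℕ) : Set (k[X] × k[X]) :=
  {p | p.1.Monic ∧ p.1.natDegree = n ∧ p.2.Monic ∧ p.2.natDegree = n ∧
    resultantAC p.1 p.2 = 1}

section Aux

variable {k : Type*} [Field k]

/-- The resultant as an element of the base field. -/
noncomputable def rr (φ ψ : k[X]) : k := resultant φ ψ φ.natDegree ψ.natDegree

theorem rr_spec {φ : k[X]} (hφ : φ.Monic) (ψ : k[X]) :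
    algebraMap k (AlgebraicClosure k) (rr φ ψ) = resultantAC φ ψ := by
  unfold rr resultantAC
  have h := resultant_eq_prod_eval (φ.map (algebraMap k (AlgebraicClosure k)))
    (ψ.map (algebraMap k (AlgebraicClosure k))) ψ.natDegree natDegree_map_le
    (IsAlgClosed.splits _)
  rw [(hφ.map _).leadingCoeff, one_pow, one_mul, natDegree_map, resultant_map_map] at h
  exact h

theorem rr_inj {a b : k}
    (h : algebraMap k (AlgebraicClosure k) a = algebraMap k (AlgebraicClosure k) b) : a = b :=
  (algebraMap k (AlgebraicClosure k)).injective h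

theorem rr_mul_right {φ : k[X]} (hφ : φ.Monic) (a b : k[X]) :
    rr φ (a * b) = rr φ a * rr φ b := by
  apply rr_inj
  rw [map_mul, rr_spec hφ, rr_spec hφ, rr_spec hφ]
  simp [resultantAC, Multiset.prod_map_mul]

theorem rr_mul_left {φ φ' : k[X]} (hφ : φ.Monic) (hφ' : φ'.Monic) (a : k[X]) :
    rr (φ * φ') a = rr φ a * rr φ' a := by
  apply rr_inj
  rw [map_mul, rr_spec hφ, rr_spec hφ', rr_spec (hφ.mul hφ')]
  unfold resultantAC
  rw [Polynomial.map_mul, roots_mul, Multiset.map_add, Multiset.prod_add]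
  exact ((hφ.map _).mul (hφ'.map _)).ne_zero

theorem rr_one_left (a : k[X]) : rr (1 : k[X]) a = 1 := by
  apply rr_inj
  rw [rr_spec monic_one]
  simp [resultantAC]

theorem rr_pow_left {φ : k[X]} (hφ : φ.Monic) (a : k[X]) (m : ℕ) :
    rr (φ ^ m) a = rr φ a ^ m := by
  induction m with
  | zero => simp [rr_one_left]
  | succ m ih => rw [pow_succ, rr_mul_left (hφ.pow m) hφ, ih, pow_succ]

theorem rr_C {φ : k[X]} (hφ : φ.Monic) (c : k) : rr φ (C c) = c ^ φ.natDegree := by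
  apply rr_inj
  rw [rr_spec hφ]
  unfold resultantAC
  have h : (φ.map (algebraMap k (AlgebraicClosure k))).roots.card = φ.natDegree := by
    rw [← (IsAlgClosed.splits _).natDegree_eq_card_roots, natDegree_map]
  simp [h]

theorem rr_one {φ : k[X]} (hφ : φ.Monic) : rr φ 1 = 1 := by
  have := rr_C hφ 1
  simpa using this

theorem rr_congr {φ : k[X]} (hφ : φ.Monic) {a b : k[X]} (h : φ ∣ a - b) : rr φ a = rr φ b := by
  apply rr_inj
  rw [rr_spec hφ, rr_spec hφ]
  unfold resultantAC
  congr 1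
  apply Multiset.map_congr rfl
  intro α hα
  obtain ⟨c, hc⟩ := h
  have h0 : (φ.map (algebraMap k (AlgebraicClosure k))).eval α = 0 :=
    (mem_roots'.1 hα).2
  have ha : a = b + φ * c := by rw [← hc]; ring
  rw [ha]
  simp only [Polynomial.map_add, Polynomial.map_mul, eval_add, eval_mul, h0, zero_mul, add_zero]

theorem rr_isUnit {φ : k[X]} (hφ : φ.Monic) {a : k[X]} (h : IsCoprime φ a) : rr φ a ≠ 0 := by
  obtain ⟨u, v, huv⟩ := h
  intro h0
  have h1 : rr φ (v * a) = 1 := by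
    rw [← rr_one hφ]
    apply rr_congr hφ
    exact ⟨-u, by linear_combination huv⟩
  rw [rr_mul_right hφ, h0, mul_zero] at h1
  exact zero_ne_one h1

theorem rr_surj [Finite k] {p : k[X]} (hp : p.Monic) (hirr : Irreducible p) (c : k) :
    ∃ a : k[X], rr p a = c := by
  have : Fact (Irreducible p) := ⟨hirr⟩
  let pb := AdjoinRoot.powerBasis hp.ne_zero
  have : FiniteDimensional k (AdjoinRoot p) := pb.finite
  have : Finite (AdjoinRoot p) := Module.finite_of_finite k
  obtain ⟨x, hx⟩ := FiniteField.norm_surjective k (AdjoinRoot p) c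
  obtain ⟨a, rfl⟩ := AdjoinRoot.mk_surjective x
  refine ⟨a, ?_⟩
  rw [← hx]
  apply rr_inj
  rw [rr_spec hp, Algebra.norm_eq_prod_embeddings k (AlgebraicClosure k)]
  have hmin : minpoly k pb.gen = p := by
    have := AdjoinRoot.minpoly_powerBasis_gen_of_monic hp
    simpa [pb] using this
  classical
  have hsep : IsSeparable k pb.gen := Algebra.IsSeparable.isSeparable k _
  rw [Fintype.prod_equiv (pb.liftEquiv' (B := AlgebraicClosure k))
    (fun σ => σ (AdjoinRoot.mk p a))
    (fun x => (a.map (algebraMap k (AlgebraicClosure k))).eval x.1) ?_]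
  · rw [Finset.prod_mem_multiset _ _
      (fun x => (a.map (algebraMap k (AlgebraicClosure k))).eval x) (fun _ => rfl),
      Finset.prod_eq_multiset_prod, Multiset.toFinset_val,
      Multiset.dedup_eq_self.mpr]
    · rw [hmin]; rfl
    · exact nodup_roots (.map hsep)
  · intro σ
    have : AdjoinRoot.mk p a = aeval (pb.gen) a := by
      simp [pb, AdjoinRoot.aeval_eq]
    rw [this, ← aeval_algHom_apply, PowerBasis.liftEquiv'_apply_coe]
    simp [eval_map_algebraMap]


variable [Finite k]

theorem monicSet_finite (n : ℕ) : {p : k[X] | p.Monic ∧ p.natDegree = n}.Finite := by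
  have : Finite {p : k[X] // p.Monic ∧ p.natDegree = n} :=
    Finite.of_equiv _ ((monicEquivDegreeLT (R := k) n).trans (degreeLTEquiv k n).toEquiv).symm
  exact Set.finite_coe_iff.1 this

variable (k) in
/-- The finset of monic polynomials of degree `n`. -/
noncomputable def MM (n : ℕ) : Finset k[X] := (monicSet_finite (k := k) n).toFinset

theorem mem_MM {n : ℕ} {p : k[X]} : p ∈ MM k n ↔ p.Monic ∧ p.natDegree = n := by
  simp [MM]

theorem card_MM (n : ℕ) : (MM k n).card = Nat.card k ^ n := by
  unfold MM
  rw [← Set.ncard_eq_toFinset_card _ (monicSet_finite n)]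
  rw [← Nat.card_coe_set_eq]
  refine (Nat.card_congr (β := Fin n → k)
    ((monicEquivDegreeLT (R := k) n).trans (degreeLTEquiv k n).toEquiv)).trans ?_
  simp [Nat.card_fun]

open Classical in
variable (k) in
/-- Coprime pairs. -/
noncomputable def CP (n : ℕ) : Finset (k[X] × k[X]) :=
  (MM k n ×ˢ MM k n).filter fun x => IsCoprime x.1 x.2

open Classical in
theorem gcd_fiber (d j : ℕ) (hj : j ≤ d) :
    ((MM k d ×ˢ MM k d).filter fun x => (EuclideanDomain.gcd x.1 x.2).natDegree = j).card
      = Nat.card k ^ j * (CP k (d - j)).card := by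
  rw [← card_MM, ← Finset.card_product]
  symm
  have hg : ∀ h a b : k[X], IsCoprime a b →
      Associated (EuclideanDomain.gcd (h * a) (h * b)) h := by
    intro h a b hab
    apply associated_of_dvd_dvd
    · obtain ⟨u, v, huv⟩ := hab
      have : h = u * (h * a) + v * (h * b) := by linear_combination (-h) * huv
      rw [this]
      exact dvd_add (Dvd.dvd.mul_left (by rw [← this]; exact EuclideanDomain.gcd_dvd_left _ _) _)
        (Dvd.dvd.mul_left (by rw [← this]; exact EuclideanDomain.gcd_dvd_right _ _) _)
    · exact EuclideanDomain.dvd_gcd (dvd_mul_right _ _) (dvd_mul_right _ _)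
  refine Finset.card_bij (fun x _ => (x.1 * x.2.1, x.1 * x.2.2)) ?_ ?_ ?_
  · rintro ⟨h, a, b⟩ hx
    simp only [Finset.mem_product, CP, Finset.mem_filter, mem_MM] at hx ⊢
    obtain ⟨⟨hm, hd⟩, ⟨⟨am, ad⟩, bm, bd⟩, hc⟩ := hx
    refine ⟨⟨⟨hm.mul am, ?_⟩, hm.mul bm, ?_⟩, ?_⟩
    · rw [hm.natDegree_mul am]; omega
    · rw [hm.natDegree_mul bm]; omega
    · rw [natDegree_eq_of_degree_eq (degree_eq_degree_of_associated (hg h a b hc)), hd]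
  · rintro ⟨h, a, b⟩ hx ⟨h', a', b'⟩ hx' heq
    simp only [Finset.mem_product, CP, Finset.mem_filter, mem_MM] at hx hx'
    simp only [Prod.mk.injEq] at heq
    have e1 := hg h a b hx.2.2
    rw [heq.1, heq.2] at e1
    have e2 : h = h' := eq_of_monic_of_associated hx.1.1 hx'.1.1
      (e1.symm.trans (hg h' a' b' hx'.2.2))
    subst e2
    have h0 := hx.1.1.ne_zero
    rw [mul_left_cancel₀ h0 heq.1, mul_left_cancel₀ h0 heq.2]
  · rintro ⟨x, y⟩ hxy
    simp only [Finset.mem_product, Finset.mem_filter, mem_MM] at hxy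
    obtain ⟨⟨⟨xm, xd⟩, ym, yd⟩, hdeg⟩ := hxy
    have hne : EuclideanDomain.gcd x y ≠ 0 := by
      intro h
      exact xm.ne_zero (EuclideanDomain.gcd_eq_zero_iff.1 h).1
    set g := EuclideanDomain.gcd x y with hgdef
    have hmon : (normalize g).Monic := monic_normalize hne
    have hass : Associated (normalize g) g := normalize_associated g
    have hnd : (normalize g).natDegree = j := by
      rw [natDegree_eq_of_degree_eq (degree_eq_degree_of_associated hass), hdeg]
    obtain ⟨a, ha⟩ : normalize g ∣ x := hass.dvd.trans (EuclideanDomain.gcd_dvd_left x y)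
    obtain ⟨b, hb⟩ : normalize g ∣ y := hass.dvd.trans (EuclideanDomain.gcd_dvd_right x y)
    have am : a.Monic := hmon.of_mul_monic_left (ha ▸ xm)
    have bm : b.Monic := hmon.of_mul_monic_left (hb ▸ ym)
    have ad : a.natDegree = d - j := by
      have := hmon.natDegree_mul am
      rw [← ha] at this; omega
    have bd : b.natDegree = d - j := by
      have := hmon.natDegree_mul bm
      rw [← hb] at this; omega
    refine ⟨(normalize g, a, b), ?_, ?_⟩
    · simp only [Finset.mem_product, CP, Finset.mem_filter, mem_MM]
      refine ⟨⟨hmon, hnd⟩, ⟨⟨am, ad⟩, bm, bd⟩, ?_⟩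
      obtain ⟨w, hw⟩ := hass.symm.dvd
      have hbez := EuclideanDomain.gcd_eq_gcd_ab x y
      rw [← hgdef] at hbez
      refine ⟨w * EuclideanDomain.gcdA x y, w * EuclideanDomain.gcdB x y, ?_⟩
      apply mul_left_cancel₀ hmon.ne_zero
      calc normalize g * (w * EuclideanDomain.gcdA x y * a + w * EuclideanDomain.gcdB x y * b)
          = w * ((normalize g * a) * EuclideanDomain.gcdA x y
            + (normalize g * b) * EuclideanDomain.gcdB x y) := by ring
        _ = w * g := by rw [← ha, ← hb, ← hbez]
        _ = normalize g * 1 := by rw [hw]; ring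
    · simp only [← ha, ← hb]

open Classical in
theorem total_pairs (d : ℕ) :
    Nat.card k ^ (2 * d) = ∑ j ∈ Finset.range (d + 1), Nat.card k ^ j * (CP k (d - j)).card := by
  have h : (MM k d ×ˢ MM k d).card = Nat.card k ^ (2 * d) := by
    rw [Finset.card_product, card_MM, two_mul, pow_add]
  rw [← h, Finset.card_eq_sum_card_fiberwise
    (f := fun x => (EuclideanDomain.gcd x.1 x.2).natDegree) (t := Finset.range (d + 1))]
  · apply Finset.sum_congr rfl
    intro j hj
    exact gcd_fiber d j (by simpa [Nat.lt_succ_iff] using hj)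
  · rintro ⟨x, y⟩ hx
    simp only [Finset.coe_product, Set.mem_prod, Finset.mem_coe, mem_MM] at hx
    simp only [Finset.coe_range, Set.mem_Iio, Nat.lt_succ_iff]
    rw [← hx.1.2]
    exact natDegree_le_of_dvd (EuclideanDomain.gcd_dvd_left x y) hx.1.1.ne_zero

theorem card_CP (d : ℕ) (hd : 1 ≤ d) :
    (CP k d).card = (Nat.card k - 1) * Nat.card k ^ (2 * d - 1) := by
  obtain ⟨e, rfl⟩ : ∃ e, d = e + 1 := ⟨d - 1, by omega⟩
  have h1 := total_pairs (k := k) (e + 1)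
  have h2 := total_pairs (k := k) e
  rw [Finset.sum_range_succ'] at h1
  have h3 : ∑ j ∈ Finset.range (e + 1), Nat.card k ^ (j + 1) * (CP k (e + 1 - (j + 1))).card
      = Nat.card k * Nat.card k ^ (2 * e) := by
    rw [h2, Finset.mul_sum]
    apply Finset.sum_congr rfl
    intro j _
    rw [Nat.add_sub_add_right, pow_succ]; ring
  rw [h3] at h1
  simp only [pow_zero, one_mul, Nat.sub_zero] at h1
  have e1 : 2 * (e + 1) - 1 = 2 * e + 1 := by omega
  rw [e1, Nat.sub_mul, one_mul]
  have e2 : Nat.card k ^ (2 * (e + 1)) = Nat.card k * Nat.card k ^ (2 * e + 1) := by ring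
  have e3 : Nat.card k ^ (2 * e + 1) = Nat.card k * Nat.card k ^ (2 * e) := by ring
  rw [e2] at h1
  omega


set_option linter.unusedSectionVars false

open Classical in
theorem fiber_card {d N : ℕ} {g : k[X]} (hg : g ∈ MM k d) (hd : d ≤ N) (y : AdjoinRoot g) :
    ((MM k N).filter fun ψ => AdjoinRoot.mk g ψ = y).card = Nat.card k ^ (N - d) := by
  obtain ⟨y, rfl⟩ := AdjoinRoot.mk_surjective y
  rw [mem_MM] at hg
  obtain ⟨gm, gd⟩ := hg
  rw [← card_MM]
  symm
  have hdeg : ∀ a : k[X], a.Monic → degree (y %ₘ g) < degree (g * a) := by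
    intro a am
    refine (degree_modByMonic_lt y gm).trans_le ?_
    exact degree_le_of_dvd (dvd_mul_right _ _) (gm.mul am).ne_zero
  refine Finset.card_bij (fun a _ => g * a + y %ₘ g) ?_ ?_ ?_
  · intro a ha
    rw [mem_MM] at ha
    rw [Finset.mem_filter, mem_MM]
    refine ⟨⟨(gm.mul ha.1).add_of_left (hdeg a ha.1), ?_⟩, ?_⟩
    · rw [natDegree_add_eq_left_of_degree_lt (hdeg a ha.1), gm.natDegree_mul ha.1]
      omega
    · rw [AdjoinRoot.mk_eq_mk]
      have := modByMonic_add_div y g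
      exact ⟨a - y /ₘ g, by linear_combination this⟩
  · intro a _ b _ h
    exact mul_left_cancel₀ gm.ne_zero (add_right_cancel h)
  · intro ψ hψ
    rw [Finset.mem_filter, mem_MM, AdjoinRoot.mk_eq_mk] at hψ
    obtain ⟨⟨ψm, ψd⟩, c, hc⟩ := hψ
    have h1 := modByMonic_add_div y g
    have h2 : g * (c + y /ₘ g) + y %ₘ g = ψ := by linear_combination h1 - hc
    have h3 : g * (c + y /ₘ g) = ψ - y %ₘ g := by linear_combination h2
    have hlt : degree (-(y %ₘ g)) < degree ψ := by
      rw [degree_neg]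
      refine (degree_modByMonic_lt y gm).trans_le ?_
      rw [degree_eq_natDegree gm.ne_zero, degree_eq_natDegree ψm.ne_zero, gd, ψd]
      exact_mod_cast hd
    have hm : (g * (c + y /ₘ g)).Monic := by
      rw [h3, sub_eq_add_neg]
      exact ψm.add_of_left hlt
    have hm2 := gm.of_mul_monic_left hm
    refine ⟨c + y /ₘ g, ?_, h2⟩
    rw [mem_MM]
    refine ⟨hm2, ?_⟩
    have h4 := gm.natDegree_mul hm2
    rw [h3, sub_eq_add_neg, natDegree_add_eq_left_of_degree_lt hlt] at h4
    omega

theorem finite_adjoinRoot {g : k[X]} (gm : g.Monic) : Finite (AdjoinRoot g) := by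
  have : Module.Finite k (AdjoinRoot g) := (AdjoinRoot.powerBasis gm.ne_zero).finite
  exact Module.finite_of_finite k

open Classical in
theorem filter_card {d N : ℕ} {g : k[X]} (hg : g ∈ MM k d) (hd : d ≤ N)
    (P : AdjoinRoot g → Prop) :
    ((MM k N).filter fun ψ => P (AdjoinRoot.mk g ψ)).card
      = Nat.card k ^ (N - d) * Nat.card {y // P y} := by
  have := finite_adjoinRoot (mem_MM.1 hg).1
  have := Fintype.ofFinite (AdjoinRoot g)
  rw [Finset.card_eq_sum_card_fiberwise (f := fun ψ => AdjoinRoot.mk g ψ)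
    (t := Finset.univ.filter P)]
  · rw [Finset.sum_congr rfl (g := fun _ => Nat.card k ^ (N - d))]
    · rw [Finset.sum_const, smul_eq_mul, mul_comm, Nat.card_eq_fintype_card (α := {y // P y}),
        Fintype.card_subtype]
    · intro y hy
      rw [← fiber_card hg hd y, Finset.filter_filter]
      congr 1
      apply Finset.filter_congr
      intro ψ _
      simp only [Finset.mem_filter, Finset.mem_univ, true_and] at hy
      constructor
      · exact fun h => h.2
      · exact fun h => ⟨h ▸ hy, h⟩
  · intro ψ hψ
    simpa using (Finset.mem_filter.1 hψ).2

theorem isUnit_mk_iff {g ψ : k[X]} : IsUnit (AdjoinRoot.mk g ψ) ↔ IsCoprime g ψ := by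
  constructor
  · intro h
    obtain ⟨b, hb⟩ := h.exists_right_inv
    obtain ⟨b, rfl⟩ := AdjoinRoot.mk_surjective b
    rw [← map_mul, ← map_one (AdjoinRoot.mk g), AdjoinRoot.mk_eq_mk] at hb
    obtain ⟨c, hc⟩ := hb
    exact ⟨-c, b, by linear_combination hc⟩
  · rintro ⟨u, v, h⟩
    refine IsUnit.of_mul_eq_one (AdjoinRoot.mk g v) ?_
    rw [← map_mul, ← map_one (AdjoinRoot.mk g), AdjoinRoot.mk_eq_mk]
    exact ⟨-u, by linear_combination h⟩

/-- The number of units modulo `g`. -/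
noncomputable def cc (g : k[X]) : ℕ := Nat.card (AdjoinRoot g)ˣ

theorem cc_eq (g : k[X]) : cc g = Nat.card {y : AdjoinRoot g // IsUnit y} := by
  refine Nat.card_congr (Equiv.ofBijective (fun u => ⟨u, u.isUnit⟩) ⟨?_, ?_⟩)
  · intro a b h
    exact Units.ext (by simpa using h)
  · rintro ⟨y, u, rfl⟩
    exact ⟨u, rfl⟩

open Classical in
theorem coprime_card {d N : ℕ} {g : k[X]} (hg : g ∈ MM k d) (hd : d ≤ N) :
    ((MM k N).filter fun ψ => IsCoprime g ψ).card = Nat.card k ^ (N - d) * cc g := by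
  rw [cc_eq, ← filter_card hg hd]
  congr 1
  apply Finset.filter_congr
  intro ψ _
  rw [isUnit_mk_iff]

theorem pow_mem_MM {d m : ℕ} {g : k[X]} (hg : g ∈ MM k d) : g ^ m ∈ MM k (m * d) := by
  rw [mem_MM] at *
  exact ⟨hg.1.pow m, by rw [hg.1.natDegree_pow, hg.2]⟩

theorem cc_pow {d m : ℕ} {g : k[X]} (hg : g ∈ MM k d) (hm : 1 ≤ m) :
    cc (g ^ m) = Nat.card k ^ (m * d - d) * cc g := by
  classical
  have hle : d ≤ m * d := Nat.le_mul_of_pos_left d hm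
  have h1 := coprime_card (pow_mem_MM (m := m) hg) le_rfl
  rw [Nat.sub_self, pow_zero, one_mul] at h1
  rw [← h1, ← coprime_card hg hle]
  congr 1
  apply Finset.filter_congr
  intro ψ _
  exact IsCoprime.pow_left_iff (by omega)

theorem sum_cc (d : ℕ) : ∑ g ∈ MM k d, cc g = (CP k d).card := by
  classical
  unfold CP
  rw [Finset.card_filter, Finset.sum_product]
  apply Finset.sum_congr rfl
  intro g hg
  have h1 := coprime_card hg le_rfl
  rw [Nat.sub_self, pow_zero, one_mul] at h1
  rw [← h1, Finset.card_filter]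


/-- The norm map modulo a monic polynomial. -/
noncomputable def NN {φ : k[X]} (hφ : φ.Monic) : AdjoinRoot φ →* k where
  toFun x := rr φ (Function.surjInv AdjoinRoot.mk_surjective x)
  map_one' := by
    rw [← rr_one hφ]
    apply rr_congr hφ
    rw [← AdjoinRoot.mk_eq_mk, Function.surjInv_eq AdjoinRoot.mk_surjective, map_one]
  map_mul' x y := by
    rw [← rr_mul_right hφ]
    apply rr_congr hφ
    rw [← AdjoinRoot.mk_eq_mk, map_mul]
    simp only [Function.surjInv_eq AdjoinRoot.mk_surjective]

theorem NN_mk {φ : k[X]} (hφ : φ.Monic) (ψ : k[X]) : NN hφ (AdjoinRoot.mk φ ψ) = rr φ ψ := by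
  change rr φ _ = _
  apply rr_congr hφ
  rw [← AdjoinRoot.mk_eq_mk, Function.surjInv_eq AdjoinRoot.mk_surjective]

/-- The image of the norm map on units. -/
noncomputable def HH {φ : k[X]} (hφ : φ.Monic) : Subgroup kˣ := (Units.map (NN hφ)).range

theorem mem_HH {φ : k[X]} (hφ : φ.Monic) (u : kˣ) :
    u ∈ HH hφ ↔ ∃ ψ, IsCoprime φ ψ ∧ rr φ ψ = u := by
  unfold HH
  rw [MonoidHom.mem_range]
  constructor
  · rintro ⟨x, rfl⟩
    obtain ⟨ψ, hψ⟩ := AdjoinRoot.mk_surjective x.1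
    refine ⟨ψ, ?_, ?_⟩
    · rw [← isUnit_mk_iff, hψ]; exact x.isUnit
    · rw [Units.coe_map, ← hψ]; exact (NN_mk hφ ψ).symm
  · rintro ⟨ψ, hc, h⟩
    obtain ⟨x, hx⟩ := isUnit_mk_iff.2 hc
    refine ⟨x, Units.ext ?_⟩
    rw [Units.coe_map, hx, ← h]; exact NN_mk hφ ψ

theorem isCoprime_of_rr {φ : k[X]} (hφ : φ.Monic) {ψ : k[X]} (h : rr φ ψ ≠ 0) :
    IsCoprime φ ψ := by
  unfold rr at h
  by_contra hc
  exact h (resultant_eq_zero_iff.2 ⟨Or.inl hφ.ne_zero, hc⟩)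

open Classical in
theorem ker_card {n : ℕ} {φ : k[X]} (hφ : φ ∈ MM k n) (hm : φ.Monic) :
    ((MM k n).filter fun ψ => rr φ ψ = 1).card = Nat.card (Units.map (NN hm)).ker := by
  have h := filter_card hφ le_rfl (fun y => NN hm y = 1)
  rw [Nat.sub_self, pow_zero, one_mul] at h
  simp only [NN_mk] at h
  rw [h]
  symm
  refine Nat.card_congr (Equiv.ofBijective
    (fun u => ⟨(u.1 : AdjoinRoot φ), by
      have := u.2
      rw [MonoidHom.mem_ker] at this
      simpa using congrArg Units.val this⟩) ⟨?_, ?_⟩)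
  · intro a b h
    exact Subtype.ext (Units.ext (congrArg Subtype.val h))
  · rintro ⟨y, hy⟩
    obtain ⟨ψ, rfl⟩ := AdjoinRoot.mk_surjective y
    have h1 : rr φ ψ = 1 := by rw [← NN_mk hm]; exact hy
    have hc := isCoprime_of_rr hm (ψ := ψ) (by rw [h1]; exact one_ne_zero)
    obtain ⟨x, hx⟩ := isUnit_mk_iff.2 hc
    refine ⟨⟨x, ?_⟩, Subtype.ext hx⟩
    rw [MonoidHom.mem_ker]
    apply Units.ext
    rw [Units.coe_map, hx]; exact hy

theorem card_mul_ker {φ : k[X]} (hm : φ.Monic) :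
    (Nat.card k - 1) * Nat.card (Units.map (NN hm)).ker = cc φ * (HH hm).index := by
  have h1 := (HH hm).card_mul_index
  rw [Nat.card_units] at h1
  have h2 := (Units.map (NN hm)).ker.card_mul_index
  rw [Subgroup.index_ker] at h2
  unfold cc
  rw [← h1, ← h2]
  unfold HH
  ring

theorem index_dvd {n : ℕ} {φ : k[X]} (hφ : φ ∈ MM k n) (hm : φ.Monic)
    (hn : n ∣ Nat.card k - 1) : (HH hm).index ∣ n := by
  have h : (powMonoidHom n : kˣ →* kˣ).range ≤ HH hm := by
    rintro _ ⟨c, rfl⟩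
    rw [mem_HH]
    have h1 : rr φ (C (c : k)) = ((c ^ n : kˣ) : k) := by
      rw [rr_C hm, (mem_MM.1 hφ).2, Units.val_pow_eq_pow_val]
    exact ⟨C (c : k), isCoprime_of_rr hm (by rw [h1]; exact Units.ne_zero _), h1⟩
  have h2 := Subgroup.index_dvd_of_le h
  rwa [IsCyclic.index_powMonoidHom_range, Nat.card_units, Nat.gcd_eq_right hn] at h2

theorem dvd_index_iff {m : ℕ} (hm : m ∣ Nat.card k - 1) (H : Subgroup kˣ) :
    m ∣ H.index ↔ H ≤ (powMonoidHom m : kˣ →* kˣ).range := by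
  constructor
  · intro hmi x hx
    obtain ⟨g, hg⟩ := IsCyclic.exists_monoid_generator (α := kˣ)
    obtain ⟨j, rfl⟩ := hg x
    have h1 : (g ^ j) ^ Nat.card H = 1 := by
      have := pow_card_eq_one' (x := (⟨_, hx⟩ : H))
      exact congrArg Subtype.val this
    have hord : orderOf g = Nat.card kˣ := orderOf_eq_card_of_forall_mem_powers hg
    rw [← pow_mul] at h1
    have h2 := orderOf_dvd_of_pow_eq_one h1
    rw [hord, ← H.index_mul_card] at h2
    have h3 := Nat.dvd_of_mul_dvd_mul_right Nat.card_pos h2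
    obtain ⟨t, ht⟩ := hmi.trans h3
    exact ⟨g ^ t, by rw [powMonoidHom_apply, ← pow_mul, ht, mul_comm]⟩
  · intro h
    have h2 := Subgroup.index_dvd_of_le h
    rwa [IsCyclic.index_powMonoidHom_range, Nat.card_units, Nat.gcd_eq_right hm] at h2

theorem pow_le_HH {φ p r : k[X]} {e : ℕ} (hm : φ.Monic) (hp : p.Monic) (hirr : Irreducible p)
    (hφ : φ = p ^ e * r) (hr : ¬ p ∣ r) (c : kˣ) : c ^ e ∈ HH hm := by
  obtain ⟨a, ha⟩ := rr_surj hp hirr (c : k)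
  have hrm : r.Monic := (hp.pow e).of_mul_monic_left (hφ ▸ hm)
  have hc1 : IsCoprime p r := (hirr.coprime_iff_not_dvd).2 hr
  have hce : IsCoprime (p ^ (e + 1)) r := hc1.pow_left
  obtain ⟨s, t, hst⟩ := hce
  rw [mem_HH]
  have key : rr φ (a * (t * r) + s * p ^ (e + 1)) = ((c ^ e : kˣ) : k) := by
    subst hφ
    rw [rr_mul_left (hp.pow e) hrm, rr_pow_left hp]
    have h1 : rr p (a * (t * r) + s * p ^ (e + 1)) = c := by
      rw [← ha]
      apply rr_congr hp
      exact ⟨s * p ^ e * (1 - a), by linear_combination a * hst⟩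
    have h2 : rr r (a * (t * r) + s * p ^ (e + 1)) = 1 := by
      rw [← rr_one hrm]
      apply rr_congr hrm
      exact ⟨a * t - t, by linear_combination hst⟩
    rw [h1, h2, mul_one, Units.val_pow_eq_pow_val]
  exact ⟨_, isCoprime_of_rr hm (by rw [key]; exact Units.ne_zero _), key⟩

theorem HH_le_iff {n m : ℕ} {φ : k[X]} (hφ : φ ∈ MM k n) (hm : φ.Monic) (hm0 : 1 ≤ m)
    (hmn : m ∣ n) (hmq : m ∣ Nat.card k - 1) :
    HH hm ≤ (powMonoidHom m : kˣ →* kˣ).range ↔ ∃ g ∈ MM k (n / m), g ^ m = φ := by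
  classical
  constructor
  · intro hle
    have hcount : ∀ p ∈ UniqueFactorizationMonoid.normalizedFactors φ,
        m ∣ (UniqueFactorizationMonoid.normalizedFactors φ).count p := by
      intro p hp
      have hirr := UniqueFactorizationMonoid.irreducible_of_normalized_factor p hp
      have hnorm := UniqueFactorizationMonoid.normalize_normalized_factor p hp
      have hpm : p.Monic := by rw [← hnorm]; exact monic_normalize hirr.ne_zero
      have hfin : FiniteMultiplicity p φ := FiniteMultiplicity.of_not_isUnit hirr.not_isUnit hm.ne_zero
      obtain ⟨r, hr, hnd⟩ := hfin.exists_eq_pow_mul_and_not_dvd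
      have hcnt : (UniqueFactorizationMonoid.normalizedFactors φ).count p = multiplicity p φ := by
        have := UniqueFactorizationMonoid.emultiplicity_eq_count_normalizedFactors hirr hm.ne_zero
        rw [hnorm, hfin.emultiplicity_eq_multiplicity] at this
        exact_mod_cast this.symm
      rw [hcnt]
      obtain ⟨g, hg⟩ := IsCyclic.exists_monoid_generator (α := kˣ)
      have hord : orderOf g = Nat.card kˣ := orderOf_eq_card_of_forall_mem_powers hg
      obtain ⟨y, hy⟩ := hle (pow_le_HH hm hpm hirr hr hnd g)
      obtain ⟨j, rfl⟩ := hg y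
      simp only [powMonoidHom_apply, ← pow_mul] at hy
      rw [pow_eq_pow_iff_modEq, hord, Nat.card_units] at hy
      have h3 := hy.of_dvd hmq
      exact (Nat.ModEq.dvd_iff h3 dvd_rfl).1 (dvd_mul_left m j)
    obtain ⟨s, hs⟩ := Multiset.exists_smul_of_dvd_count _ hcount
    have hprod : s.prod ^ m = φ := by
      rw [← Multiset.prod_nsmul, ← hs]
      have h1 := UniqueFactorizationMonoid.prod_normalizedFactors hm.ne_zero
      refine eq_of_monic_of_associated ?_ hm h1
      refine monic_multiset_prod_of_monic _ id ?_ |> fun h => by simpa using h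
      intro p hp
      have hirr := UniqueFactorizationMonoid.irreducible_of_normalized_factor p hp
      rw [id, ← UniqueFactorizationMonoid.normalize_normalized_factor p hp]
      exact monic_normalize hirr.ne_zero
    have hsm : s.prod.Monic := by
      refine monic_multiset_prod_of_monic _ id ?_ |> fun h => by simpa using h
      intro p hp
      have hp : p ∈ UniqueFactorizationMonoid.normalizedFactors φ := by
        rw [hs, Multiset.mem_nsmul]; exact ⟨by omega, hp⟩
      have hirr := UniqueFactorizationMonoid.irreducible_of_normalized_factor p hp
      rw [id, ← UniqueFactorizationMonoid.normalize_normalized_factor p hp]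
      exact monic_normalize hirr.ne_zero
    refine ⟨s.prod, ?_, hprod⟩
    rw [mem_MM]
    refine ⟨hsm, ?_⟩
    have h2 := hsm.natDegree_pow m
    rw [hprod, (mem_MM.1 hφ).2] at h2
    rw [h2, Nat.mul_div_cancel_left _ (by omega)]
  · rintro ⟨g, hg, rfl⟩ x hx
    obtain ⟨ψ, hc, h⟩ := (mem_HH hm x).1 hx
    rw [rr_pow_left (mem_MM.1 hg).1] at h
    have h0 : rr g ψ ≠ 0 := by
      intro h0
      rw [h0, zero_pow (by omega)] at h
      exact x.ne_zero h.symm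
    refine ⟨Units.mk0 _ h0, Units.ext ?_⟩
    simpa using h

open Classical in
theorem key_count {n : ℕ} {φ : k[X]} (hφ : φ ∈ MM k n) (hn : 1 ≤ n)
    (hq : n ∣ Nat.card k - 1) :
    (Nat.card k - 1) * ((MM k n).filter fun ψ => rr φ ψ = 1).card
      = ∑ m ∈ n.divisors, if ∃ g ∈ MM k (n / m), g ^ m = φ then m.totient * cc φ else 0 := by
  have hm := (mem_MM.1 hφ).1
  rw [ker_card hφ hm, card_mul_ker hm]
  have hid := index_dvd hφ hm hq
  have hsub : (HH hm).index.divisors = n.divisors.filter (fun m => m ∣ (HH hm).index) := by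
    ext m
    simp only [Nat.mem_divisors, Finset.mem_filter]
    constructor
    · rintro ⟨h1, h2⟩
      exact ⟨⟨h1.trans hid, by omega⟩, h1⟩
    · rintro ⟨_, h⟩
      exact ⟨h, fun h0 => by rw [h0, zero_dvd_iff] at hid; omega⟩
  rw [← Nat.sum_totient (HH hm).index, hsub, Finset.sum_filter, Finset.mul_sum]
  apply Finset.sum_congr rfl
  intro m hmd
  have hmn := Nat.dvd_of_mem_divisors hmd
  have hm0 := Nat.pos_of_mem_divisors hmd
  have hiff := (dvd_index_iff (hmn.trans hq) (HH hm)).trans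
    (HH_le_iff hφ hm hm0 hmn (hmn.trans hq))
  by_cases h : m ∣ (HH hm).index
  · rw [if_pos h, if_pos (hiff.1 h), mul_comm]
  · rw [if_neg h, if_neg (fun h' => h (hiff.2 h')), mul_zero]

theorem sum_pow {n m : ℕ} (hm0 : 1 ≤ m) (hmn : m ∣ n) (hn : 1 ≤ n) :
    haveI : ∀ φ : k[X], Decidable (∃ g ∈ MM k (n / m), g ^ m = φ) := fun _ => Classical.dec _
    ∑ φ ∈ MM k n, (if ∃ g ∈ MM k (n / m), g ^ m = φ then m.totient * cc φ else 0)
      = (Nat.card k - 1) * (m.totient * Nat.card k ^ (n - 1 + n / m)) := by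
  classical
  obtain ⟨d, rfl⟩ := hmn
  have hd : 1 ≤ d := Nat.pos_of_ne_zero (by rintro rfl; simp at hn)
  rw [Nat.mul_div_cancel_left _ (by omega)]
  have himg : (MM k (m * d)).filter (fun φ => ∃ g ∈ MM k d, g ^ m = φ)
      = (MM k d).image (fun g => g ^ m) := by
    ext φ
    simp only [Finset.mem_filter, Finset.mem_image]
    constructor
    · exact fun h => h.2
    · rintro ⟨g, hg, rfl⟩
      exact ⟨pow_mem_MM hg, g, hg, rfl⟩
  have h1 : ∑ φ ∈ MM k (m * d), (if ∃ g ∈ MM k d, g ^ m = φ then m.totient * cc φ else 0)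
      = ∑ g ∈ MM k d, m.totient * cc (g ^ m) := by
    rw [← Finset.sum_filter, himg, Finset.sum_image]
    intro a ha b hb h
    have ha' := mem_MM.1 ha
    have hb' := mem_MM.1 hb
    have hm' : m ≠ 0 := by omega
    apply eq_of_monic_of_associated ha'.1 hb'.1
    apply associated_of_dvd_dvd
    · exact (UniqueFactorizationMonoid.pow_dvd_pow_iff_dvd hm').1 (dvd_of_eq h)
    · exact (UniqueFactorizationMonoid.pow_dvd_pow_iff_dvd hm').1 (dvd_of_eq h.symm)
  have h2 : ∑ g ∈ MM k d, m.totient * cc (g ^ m)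
      = (Nat.card k - 1) * (m.totient * Nat.card k ^ (m * d - 1 + d)) := by
    rw [Finset.sum_congr rfl (fun g hg => by rw [cc_pow hg hm0]), ← Finset.mul_sum,
      ← Finset.mul_sum, sum_cc, card_CP d hd]
    have hle : d ≤ m * d := Nat.le_mul_of_pos_left d hm0
    have he : m * d - 1 + d = (m * d - d) + (2 * d - 1) := by omega
    rw [he, pow_add]
    ring
  rw [← h2, ← h1]
  apply Finset.sum_congr rfl
  intro φ _
  congr

end Aux

/-- if `q ≡ 1 (mod n)` then `|Res_n(F_q)| = Σ_{d ∣ n} ϕ(n/d) · q^{n-1+d}`. -/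
theorem stmt_4 (F : Type*) [Field F] [Fintype F] (q : ℕ) (hq : Fintype.card F = q)
    (n : ℕ) (hn : 1 ≤ n) (hmod : n ∣ (q - 1)) :
    Nat.card (ResPairs F n) =
      ∑ d ∈ n.divisors, Nat.totient (n / d) * q ^ (n - 1 + d) := by
  classical
  have hqc : Nat.card F = q := by rw [Nat.card_eq_fintype_card, hq]
  have hq1 : 1 < q := by rw [← hq]; exact Fintype.one_lt_card
  have hset : ResPairs F n
      = (((MM F n ×ˢ MM F n).filter fun x => rr x.1 x.2 = 1 : Finset (F[X] × F[X])) :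
        Set (F[X] × F[X])) := by
    ext ⟨a, b⟩
    simp only [ResPairs, Set.mem_ofPred_eq, Finset.coe_filter, Finset.mem_product, mem_MM]
    constructor
    · rintro ⟨h1, h2, h3, h4, h5⟩
      refine ⟨⟨⟨h1, h2⟩, h3, h4⟩, rr_inj ?_⟩
      rw [rr_spec h1, h5, map_one]
    · rintro ⟨⟨⟨h1, h2⟩, h3, h4⟩, h5⟩
      refine ⟨h1, h2, h3, h4, ?_⟩
      rw [← rr_spec h1, h5, map_one]
  rw [hset, Nat.card_coe_set_eq, Set.ncard_coe_finset, Finset.card_filter, Finset.sum_product]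
  apply Nat.eq_of_mul_eq_mul_left (Nat.sub_pos_of_lt hq1)
  rw [Finset.mul_sum]
  have h1 : ∀ φ ∈ MM F n, (q - 1) * ∑ ψ ∈ MM F n, (if rr φ ψ = 1 then 1 else 0)
      = ∑ m ∈ n.divisors,
        if ∃ g ∈ MM F (n / m), g ^ m = φ then m.totient * cc φ else 0 := by
    intro φ hφ
    rw [← key_count hφ hn (by rw [hqc]; exact hmod), hqc, Finset.card_filter]
  rw [Finset.sum_congr rfl h1, Finset.sum_comm]
  have h2 : ∀ m ∈ n.divisors,
      ∑ φ ∈ MM F n, (if ∃ g ∈ MM F (n / m), g ^ m = φ then m.totient * cc φ else 0)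
      = (q - 1) * (m.totient * q ^ (n - 1 + n / m)) := by
    intro m hm
    have := sum_pow (k := F) (Nat.pos_of_mem_divisors hm) (Nat.dvd_of_mem_divisors hm) hn
    rw [hqc] at this
    rw [← this]
    apply Finset.sum_congr rfl
    intro φ _
    congr
  rw [Finset.sum_congr rfl h2, ← Finset.mul_sum]
  congr 1
  rw [← Nat.sum_div_divisors n (fun d => Nat.totient d * q ^ (n - 1 + n / d))]
  apply Finset.sum_congr rfl
  intro d hd
  rw [Nat.div_div_self (Nat.dvd_of_mem_divisors hd) (by omega)]
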